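/- In the consecutive prime power construction, for every nonzero β ∈ K, set M := N_β + I_{q+1} ⊗ (J_{q²} − I_q ⊗ J_q). Then M · M^⊤ = q²·I_{(q+1)q²} + (q−1)(q−3)·(I_{q+1} ⊗ J_{q²}) + 3(q−1)·J_{(q+1)q²}; that is, M is the incidence matrix of a symmetric group divisible design with parameters ((q+1)q², 2q²−q, q+1, q², q(q−1), 3(q−1)). -/

import Mathlib

/-! The matrices `C_α`, together with `C_∞ := I_q ⊗ J_q`, are the parallel classes of the affine
plane over `F`: two points are related when they have the same intercept along the given slope. The
intercepts along two different slopes are coordinates on the plane, whence `C_i C_j = J` for `i ≠ j`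
and `C_i² = q C_i`; and two distinct points lie on exactly one common line, whence
`∑ C_i = J + q I`, the sum being over all `q + 1` slopes.

The matrix `M` has the block `J - C_∞` where its slope is `∞`, and `C_α` where its slope is `α`, the
slopes being arranged in a Latin square of order `q + 1`. An off-diagonal block of `M Mᵀ` thus pairs
different slopes: `∞` occurs in two of the `q + 1` products, which are `(q - 1) J`, the others being
`J`, so the block is `3 (q - 1) J`. A diagonal block is the sum of the squares of all blocks, namely
`q ∑ C_i + q (q - 2) J = q² I + q (q - 1) J`.
-/

open Matrix Kronecker BigOperators

noncomputable section

/-- The all-ones matrix. -/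
def allOnes (n : Type*) : Matrix n n ℝ := Matrix.of fun _ _ => 1

/-- The auxiliary matrix `C_α` for `α ∈ F`: the `((a,u),(b,v))`-entry is `1` iff
`v − u = α·(b − a)`. -/
def auxC {F : Type*} [Field F] [Fintype F] [DecidableEq F] (α : F) :
    Matrix (F × F) (F × F) ℝ :=
  Matrix.of fun p r => if r.2 - p.2 = α * (r.1 - p.1) then 1 else 0

/-- The permutation matrix `P_{β,γ}` with `(a,b)`-entry `1` iff `β·(−a+b) = γ`. -/
def permP {K : Type*} [Field K] [DecidableEq K] (β γ : K) : Matrix K K ℝ :=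
  Matrix.of fun a b => if β * (-a + b) = γ then 1 else 0

/-- The matrix `N_β = Σ_{γ∈K∖{0}} P_{β,γ} ⊗ C_{ψ(γ)}` of the consecutive prime power
construction, where `ψ : K∖{0} → F` is a fixed bijection. -/
def NN {F K : Type*} [Field F] [Fintype F] [DecidableEq F]
    [Field K] [Fintype K] [DecidableEq K]
    (ψ : {x : K // x ≠ 0} ≃ F) (β : K) :
    Matrix (K × (F × F)) (K × (F × F)) ℝ :=
  ∑ γ : {x : K // x ≠ 0}, permP β (γ : K) ⊗ₖ auxC (ψ γ)

section FiberMatrix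

variable {X Y Z : Type*} [DecidableEq Y]

/-- The adjacency matrix of the equivalence relation `f x = f y`. -/
def fiberMatrix (f : X → Y) : Matrix X X ℝ :=
  Matrix.of fun x y => if f x = f y then 1 else 0

lemma transpose_fiberMatrix (f : X → Y) : (fiberMatrix f)ᵀ = fiberMatrix f := by
  ext x y
  simp only [fiberMatrix, transpose_apply, of_apply, eq_comm]

variable [Fintype X] {f : X → Y} {g : X → Z}

lemma fiberMatrix_mul_fiberMatrix [DecidableEq Z]
    (h : Function.Bijective fun x => (f x, g x)) :
    fiberMatrix f * fiberMatrix g = allOnes X := by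
  ext x y
  obtain ⟨z, hz⟩ := h.surjective (f x, g y)
  obtain ⟨hfz, hgz⟩ := Prod.mk.inj hz
  have hunique (w : X) (hw : w ≠ z) : ¬(f x = f w ∧ g w = g y) := fun ⟨hfw, hgw⟩ =>
    hw (h.injective (Prod.ext (hfw.symm.trans hfz.symm) (hgw.trans hgz.symm)))
  simp only [Matrix.mul_apply, fiberMatrix, allOnes, of_apply, ite_zero_mul_ite_zero, mul_one]
  rw [Fintype.sum_eq_single z fun w hw => if_neg (hunique w hw), if_pos ⟨hfz.symm, hgz⟩]

lemma card_fiber_of_bijective_prodMk [Fintype Z]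
    (h : Function.Bijective fun x => (f x, g x)) (y : Y) :
    Fintype.card {x // f x = y} = Fintype.card Z := by
  refine Fintype.card_congr (Equiv.ofBijective (fun x => g x.1) ⟨?_, fun z => ?_⟩)
  · rintro ⟨x, rfl⟩ ⟨x', hx'⟩ hg
    exact Subtype.ext (h.injective (Prod.ext hx'.symm hg))
  · obtain ⟨x, hx⟩ := h.surjective (y, z)
    exact ⟨⟨x, congrArg Prod.fst hx⟩, congrArg Prod.snd hx⟩

lemma fiberMatrix_mul_self [Fintype Z] (h : Function.Bijective fun x => (f x, g x)) :
    fiberMatrix f * fiberMatrix f = (Fintype.card Z : ℝ) • fiberMatrix f := by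
  ext x y
  have hterm (z : X) : fiberMatrix f x z * fiberMatrix f z y =
      (if f z = f y then 1 else 0) * fiberMatrix f x y := by
    simp only [fiberMatrix, of_apply]
    split_ifs <;> simp_all
  rw [Matrix.mul_apply, Fintype.sum_congr _ _ hterm, ← Finset.sum_mul, Finset.sum_boole,
    ← Fintype.card_subtype, card_fiber_of_bijective_prodMk h, Matrix.smul_apply, smul_eq_mul]

end FiberMatrix

lemma allOnes_mul_allOnes (n : Type*) [Fintype n] :
    allOnes n * allOnes n = (Fintype.card n : ℝ) • allOnes n := by
  ext
  simp [Matrix.mul_apply, allOnes]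

section AffinePlane

variable {F : Type*} [Field F]

/-- The intercept of the line through a point of the affine plane over `F` with a given slope.
The slope `none` is that of the vertical lines `x = c`, whose intercept is `c`. -/
def intercept : Option F → F × F → F
  | none, p => p.1
  | some α, p => p.2 - α * p.1

lemma exists_intercept_eq (p r : F × F) : ∃ i, intercept i p = intercept i r := by
  by_cases h : p.1 = r.1
  · exact ⟨none, h⟩
  · refine ⟨some ((p.2 - r.2) / (p.1 - r.1)), ?_⟩
    have : p.1 - r.1 ≠ 0 := sub_ne_zero.2 h
    simp only [intercept]
    field_simp
    ring

lemma intercept_pair_injective {i j : Option F} (hij : i ≠ j) :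
    Function.Injective fun p : F × F => (intercept i p, intercept j p) := by
  rintro ⟨x, y⟩ ⟨x', y'⟩ h
  obtain ⟨hi, hj⟩ := Prod.mk.inj h
  have hx : x = x' := by
    cases i <;> cases j <;> simp only [intercept] at hi hj
    · exact hi
    · exact hi
    · exact hj
    · case some.some α α' =>
      have hα : α - α' ≠ 0 := sub_ne_zero.2 fun h => hij (congrArg some h)
      exact mul_left_cancel₀ hα (by linear_combination hj - hi)
  subst hx
  cases i <;> cases j <;> simp_all [intercept]

lemma intercept_pair_bijective [Finite F] {i j : Option F} (hij : i ≠ j) :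
    Function.Bijective fun p : F × F => (intercept i p, intercept j p) :=
  (intercept_pair_injective hij).bijective_of_finite

variable [DecidableEq F]

/-- The matrix of the parallel class of lines of slope `i`: the matrix `C_i` for finite slopes,
and `I_q ⊗ J_q` for the vertical lines. -/
def parallelClass (i : Option F) : Matrix (F × F) (F × F) ℝ :=
  fiberMatrix (intercept i)

lemma parallelClass_none :
    parallelClass (none : Option F) = (1 : Matrix F F ℝ) ⊗ₖ allOnes F := by
  ext p r
  simp only [parallelClass, fiberMatrix, intercept, allOnes, Matrix.kroneckerMap_apply,
    Matrix.one_apply, of_apply, mul_one]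
  congr

lemma parallelClass_some [Fintype F] (α : F) : parallelClass (some α) = auxC α := by
  ext p r
  have : p.2 - α * p.1 = r.2 - α * r.1 ↔ r.2 - p.2 = α * (r.1 - p.1) := by
    constructor <;> intro h <;> linear_combination -h
  simp only [parallelClass, fiberMatrix, intercept, auxC, of_apply, this]

/-- The block of the design at slope `i`: the parallel class of slope `i`, complemented when the
slope is infinite. -/
def designBlock : Option F → Matrix (F × F) (F × F) ℝ
  | none => allOnes (F × F) - parallelClass none
  | some α => parallelClass (some α)

lemma designBlock_eq_zero_or_one (i : Option F) (p r : F × F) :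
    designBlock i p r = 0 ∨ designBlock i p r = 1 := by
  cases i
  · simp only [designBlock, parallelClass, fiberMatrix, allOnes, Matrix.sub_apply, of_apply]
    split_ifs <;> simp
  · simp only [designBlock, parallelClass, fiberMatrix, of_apply]
    split_ifs <;> simp

lemma transpose_designBlock (i : Option F) : (designBlock i)ᵀ = designBlock i := by
  cases i
  · exact congrArg (allOnes (F × F) - ·) (transpose_fiberMatrix _)
  · exact transpose_fiberMatrix _

variable [Fintype F]

lemma parallelClass_mul_of_ne {i j : Option F} (hij : i ≠ j) :
    parallelClass i * parallelClass j = allOnes (F × F) :=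
  fiberMatrix_mul_fiberMatrix (intercept_pair_bijective hij)

lemma parallelClass_mul_self (i : Option F) :
    parallelClass i * parallelClass i = (Fintype.card F : ℝ) • parallelClass i := by
  obtain ⟨j, hj⟩ := exists_ne i
  exact fiberMatrix_mul_self (intercept_pair_bijective hj.symm)

lemma parallelClass_mul_allOnes (i : Option F) :
    parallelClass i * allOnes (F × F) = (Fintype.card F : ℝ) • allOnes (F × F) := by
  obtain ⟨j, hj⟩ := exists_ne i
  rw [← parallelClass_mul_of_ne hj.symm, ← Matrix.mul_assoc, parallelClass_mul_self,
    Matrix.smul_mul]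

lemma allOnes_mul_parallelClass (i : Option F) :
    allOnes (F × F) * parallelClass i = (Fintype.card F : ℝ) • allOnes (F × F) := by
  obtain ⟨j, hj⟩ := exists_ne i
  rw [← parallelClass_mul_of_ne hj, Matrix.mul_assoc, parallelClass_mul_self, Matrix.mul_smul]

lemma sum_parallelClass :
    ∑ i : Option F, parallelClass i = allOnes (F × F) + (Fintype.card F : ℝ) • 1 := by
  ext p r
  rw [Matrix.sum_apply]
  by_cases hpr : p = r
  · subst hpr
    simp [parallelClass, fiberMatrix, allOnes, add_comm]
  · obtain ⟨i, hi⟩ := exists_intercept_eq p r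
    have hunique (j : Option F) (hji : j ≠ i) : intercept j p ≠ intercept j r :=
      fun hj => hpr (intercept_pair_injective hji (Prod.ext hj hi))
    rw [Fintype.sum_eq_single i fun j hji => by simp [parallelClass, fiberMatrix, hunique j hji]]
    simp [parallelClass, fiberMatrix, allOnes, hi, hpr]

lemma designBlock_mul_of_ne {i j : Option F} (hij : i ≠ j) :
    designBlock i * designBlock j =
      (if i = none ∨ j = none then (Fintype.card F : ℝ) - 1 else 1) • allOnes (F × F) := by
  cases i <;> cases j
  · exact absurd rfl hij
  · simp [designBlock, sub_mul, allOnes_mul_parallelClass, parallelClass_mul_of_ne, sub_smul]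
  · simp [designBlock, mul_sub, parallelClass_mul_allOnes, parallelClass_mul_of_ne, sub_smul]
  · simp [designBlock, parallelClass_mul_of_ne hij]

lemma designBlock_mul_self (i : Option F) :
    designBlock i * designBlock i = (Fintype.card F : ℝ) • parallelClass i +
      if i = none then ((Fintype.card F : ℝ) * (Fintype.card F - 2)) • allOnes (F × F) else 0 := by
  cases i
  · simp only [designBlock, sub_mul, mul_sub, allOnes_mul_allOnes, allOnes_mul_parallelClass,
      parallelClass_mul_allOnes, parallelClass_mul_self, Fintype.card_prod, Nat.cast_mul, if_true]
    module
  · simp [designBlock, parallelClass_mul_self]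

section Equiv

variable {S : Type*} [Fintype S]

lemma sum_designBlock_mul_self (σ : S ≃ Option F) :
    ∑ s, designBlock (σ s) * designBlock (σ s) =
      (Fintype.card F : ℝ) ^ 2 • (1 : Matrix (F × F) (F × F) ℝ) +
        ((Fintype.card F : ℝ) * (Fintype.card F - 1)) • allOnes (F × F) := by
  rw [σ.sum_comp fun i => designBlock i * designBlock i]
  simp only [designBlock_mul_self, Finset.sum_add_distrib, ← Finset.smul_sum, sum_parallelClass,
    Finset.sum_ite_eq', Finset.mem_univ, if_true]
  module

lemma sum_designBlock_mul_of_forall_ne (σ τ : S ≃ Option F) (h : ∀ s, σ s ≠ τ s) :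
    ∑ s, designBlock (σ s) * designBlock (τ s) =
      (3 * ((Fintype.card F : ℝ) - 1)) • allOnes (F × F) := by
  have hcoeff (s : S) : (if σ s = none ∨ τ s = none then (Fintype.card F : ℝ) - 1 else 1) =
      1 + ((if σ s = none then (Fintype.card F : ℝ) - 2 else 0) +
        if τ s = none then (Fintype.card F : ℝ) - 2 else 0) := by
    have := h s
    split_ifs <;> simp_all <;> ring
  have hsingle (ρ : S ≃ Option F) :
      ∑ s, (if ρ s = none then (Fintype.card F : ℝ) - 2 else 0) = Fintype.card F - 2 := by
    rw [ρ.sum_comp fun i => if i = none then (Fintype.card F : ℝ) - 2 else 0]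
    simp
  have hcard : (Fintype.card S : ℝ) = Fintype.card F + 1 := by
    exact_mod_cast (Fintype.card_congr σ).trans Fintype.card_option
  simp only [designBlock_mul_of_ne (h _), ← Finset.sum_smul, hcoeff, Finset.sum_add_distrib,
    hsingle, Finset.sum_const, Finset.card_univ, nsmul_one, hcard]
  congr 1
  ring

end Equiv

end AffinePlane

section LatinSquare

variable {F R S : Type*} [Field F] [DecidableEq F]

/-- The block matrix whose `(a, b)`-block is the design block at slope `L a b`. It is the incidence
matrix of a design when `L` is a Latin square on the `q + 1` slopes. -/
def slopeMatrix (L : R → S → Option F) : Matrix (R × (F × F)) (S × (F × F)) ℝ :=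
  Matrix.of fun p r => designBlock (L p.1 r.1) p.2 r.2

lemma transpose_slopeMatrix (L : R → S → Option F) :
    (slopeMatrix L)ᵀ = slopeMatrix fun b a => L a b := by
  ext p r
  exact congrFun₂ (transpose_designBlock (L r.1 p.1)) p.2 r.2

variable [Fintype F]

lemma slopeMatrix_mul_transpose_apply [Fintype S] (L : R → S → Option F) (a b : R)
    (x y : F × F) :
    (slopeMatrix L * (slopeMatrix L)ᵀ) (a, x) (b, y) =
      (∑ c, designBlock (L a c) * designBlock (L b c)) x y := by
  rw [transpose_slopeMatrix, Matrix.mul_apply, Matrix.sum_apply, Fintype.sum_prod_type]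
  rfl

lemma slopeMatrix_mul_transpose [DecidableEq R] [Fintype S] {L : R → S → Option F}
    (hrow : ∀ a, Function.Bijective (L a)) (hcol : ∀ c, Function.Injective fun a => L a c) :
    slopeMatrix L * (slopeMatrix L)ᵀ =
      (Fintype.card F : ℝ) ^ 2 • (1 : Matrix (R × (F × F)) (R × (F × F)) ℝ) +
        (((Fintype.card F : ℝ) - 1) * ((Fintype.card F : ℝ) - 3)) •
          ((1 : Matrix R R ℝ) ⊗ₖ allOnes (F × F)) +
        (3 * ((Fintype.card F : ℝ) - 1)) • allOnes (R × (F × F)) := by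
  ext ⟨a, x⟩ ⟨b, y⟩
  rw [slopeMatrix_mul_transpose_apply]
  by_cases hab : a = b
  · subst hab
    have hsum := sum_designBlock_mul_self (Equiv.ofBijective (L a) (hrow a))
    simp only [Equiv.ofBijective_apply] at hsum
    simp only [hsum, allOnes, smul_of, Matrix.add_apply, Matrix.smul_apply, Matrix.one_apply,
      smul_eq_mul, mul_ite, mul_one, mul_zero, of_apply, Pi.smul_apply, Prod.mk.injEq, true_and,
      kroneckerMap_apply, if_true]
    ring
  · have hsum := sum_designBlock_mul_of_forall_ne (Equiv.ofBijective (L a) (hrow a))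
      (Equiv.ofBijective (L b) (hrow b)) fun c h => hab (hcol c h)
    simp only [Equiv.ofBijective_apply] at hsum
    simp [hsum, allOnes, hab]

theorem NN_gdd_general [Fintype R] [DecidableEq R] {L : R → R → Option F}
    (hrow : ∀ a, Function.Bijective (L a)) (hcol : ∀ b, Function.Bijective fun a => L a b) :
    (∀ p r, slopeMatrix L p r = 0 ∨ slopeMatrix L p r = 1) ∧
    slopeMatrix L * (slopeMatrix L)ᵀ =
      (Fintype.card F : ℝ) ^ 2 • (1 : Matrix (R × (F × F)) (R × (F × F)) ℝ) +
        (((Fintype.card F : ℝ) - 1) * ((Fintype.card F : ℝ) - 3)) •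
          ((1 : Matrix R R ℝ) ⊗ₖ allOnes (F × F)) +
        (3 * ((Fintype.card F : ℝ) - 1)) • allOnes (R × (F × F)) ∧
    (slopeMatrix L)ᵀ * slopeMatrix L =
      (Fintype.card F : ℝ) ^ 2 • (1 : Matrix (R × (F × F)) (R × (F × F)) ℝ) +
        (((Fintype.card F : ℝ) - 1) * ((Fintype.card F : ℝ) - 3)) •
          ((1 : Matrix R R ℝ) ⊗ₖ allOnes (F × F)) +
        (3 * ((Fintype.card F : ℝ) - 1)) • allOnes (R × (F × F)) := by
  refine ⟨fun p r => designBlock_eq_zero_or_one _ _ _,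
    slopeMatrix_mul_transpose hrow fun b => (hcol b).injective, ?_⟩
  have h := slopeMatrix_mul_transpose hcol fun a => (hrow a).injective
  rwa [← transpose_slopeMatrix, transpose_transpose] at h

end LatinSquare

section ConsecutivePrimePowers

variable {F K : Type*} [Field K] [DecidableEq K]

/-- The extension of `ψ` to a bijection from `K` onto the slopes, with `0` going to the infinite
slope. -/
def slopeEquiv (ψ : {x : K // x ≠ 0} ≃ F) : K ≃ Option F :=
  (Equiv.optionSubtypeNe 0).symm.trans ψ.optionCongr

lemma slopeEquiv_zero (ψ : {x : K // x ≠ 0} ≃ F) : slopeEquiv ψ 0 = none := by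
  simp [slopeEquiv]

lemma slopeEquiv_of_ne_zero (ψ : {x : K // x ≠ 0} ≃ F) {t : K} (ht : t ≠ 0) :
    slopeEquiv ψ t = some (ψ ⟨t, ht⟩) := by
  simp [slopeEquiv, Equiv.optionSubtypeNe_symm_of_ne ht]

lemma slopeEquiv_mul_sub_left_bijective (ψ : {x : K // x ≠ 0} ≃ F) {β : K} (hβ : β ≠ 0) (a : K) :
    Function.Bijective fun b => slopeEquiv ψ (β * (b - a)) :=
  (((Equiv.subRight a).trans (Equiv.mulLeft₀ β hβ)).trans (slopeEquiv ψ)).bijective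

lemma slopeEquiv_mul_sub_right_bijective (ψ : {x : K // x ≠ 0} ≃ F) {β : K} (hβ : β ≠ 0) (b : K) :
    Function.Bijective fun a => slopeEquiv ψ (β * (b - a)) :=
  (((Equiv.subLeft b).trans (Equiv.mulLeft₀ β hβ)).trans (slopeEquiv ψ)).bijective

variable [Field F] [Fintype F] [DecidableEq F] [Fintype K]

lemma NN_apply_of_eq (ψ : {x : K // x ≠ 0} ≃ F) (β a : K) (x y : F × F) :
    NN ψ β (a, x) (a, y) = 0 := by
  have (γ : {x : K // x ≠ 0}) : (0 : K) ≠ γ := γ.2.symm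
  simp [NN, Matrix.sum_apply, permP, this]

lemma NN_apply_of_ne (ψ : {x : K // x ≠ 0} ≃ F) {β a b : K} (h : β * (b - a) ≠ 0)
    (x y : F × F) : NN ψ β (a, x) (b, y) = auxC (ψ ⟨β * (b - a), h⟩) x y := by
  simp only [NN, Matrix.sum_apply, Matrix.kroneckerMap_apply, permP, of_apply, neg_add_eq_sub]
  rw [Fintype.sum_eq_single ⟨β * (b - a), h⟩]
  · simp
  · intro γ hγ
    rw [if_neg fun h' => hγ (Subtype.ext h'.symm), zero_mul]

lemma NN_add_eq_slopeMatrix (ψ : {x : K // x ≠ 0} ≃ F) {β : K} (hβ : β ≠ 0) :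
    NN ψ β + (1 : Matrix K K ℝ) ⊗ₖ (allOnes (F × F) - (1 : Matrix F F ℝ) ⊗ₖ allOnes F) =
      slopeMatrix fun a b => slopeEquiv ψ (β * (b - a)) := by
  ext ⟨a, x⟩ ⟨b, y⟩
  rw [← parallelClass_none, Matrix.add_apply, Matrix.kroneckerMap_apply]
  by_cases hab : a = b
  · subst hab
    simp [NN_apply_of_eq, slopeMatrix, slopeEquiv_zero, designBlock]
  · have h : β * (b - a) ≠ 0 := mul_ne_zero hβ (sub_ne_zero.2 (Ne.symm hab))
    simp [NN_apply_of_ne ψ h, slopeMatrix, slopeEquiv_of_ne_zero ψ h, designBlock,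
      parallelClass_some, hab]

end ConsecutivePrimePowers

/-- In the consecutive prime power construction, `M = N_β + I_{q+1} ⊗ (J_{q²} − I_q ⊗ J_q)`
is a `(0,1)`-matrix satisfying
`M·Mᵀ = Mᵀ·M = q²·I + (q−1)(q−3)·(I_{q+1} ⊗ J_{q²}) + 3(q−1)·J`, i.e. it is the incidence
matrix of a symmetric group divisible design with parameters
`((q+1)q², 2q²−q, q+1, q², q(q−1), 3(q−1))`. -/
theorem NN_gdd {F K : Type*} [Field F] [Fintype F] [DecidableEq F]
    [Field K] [Fintype K] [DecidableEq K]
    (hcard : Fintype.card K = Fintype.card F + 1)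
    (ψ : {x : K // x ≠ 0} ≃ F) (β : K) (hβ : β ≠ 0) :
    (∀ p r, (NN ψ β +
        (1 : Matrix K K ℝ) ⊗ₖ (allOnes (F × F) - (1 : Matrix F F ℝ) ⊗ₖ allOnes F)) p r = 0 ∨
      (NN ψ β +
        (1 : Matrix K K ℝ) ⊗ₖ (allOnes (F × F) - (1 : Matrix F F ℝ) ⊗ₖ allOnes F)) p r = 1) ∧
    (NN ψ β + (1 : Matrix K K ℝ) ⊗ₖ (allOnes (F × F) - (1 : Matrix F F ℝ) ⊗ₖ allOnes F)) *
        (NN ψ β + (1 : Matrix K K ℝ) ⊗ₖ (allOnes (F × F) - (1 : Matrix F F ℝ) ⊗ₖ allOnes F))ᵀ =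
      (Fintype.card F : ℝ) ^ 2 • (1 : Matrix (K × (F × F)) (K × (F × F)) ℝ) +
        (((Fintype.card F : ℝ) - 1) * ((Fintype.card F : ℝ) - 3)) •
          ((1 : Matrix K K ℝ) ⊗ₖ allOnes (F × F)) +
        (3 * ((Fintype.card F : ℝ) - 1)) • allOnes (K × (F × F)) ∧
    (NN ψ β + (1 : Matrix K K ℝ) ⊗ₖ (allOnes (F × F) - (1 : Matrix F F ℝ) ⊗ₖ allOnes F))ᵀ *
        (NN ψ β + (1 : Matrix K K ℝ) ⊗ₖ (allOnes (F × F) - (1 : Matrix F F ℝ) ⊗ₖ allOnes F)) =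
      (Fintype.card F : ℝ) ^ 2 • (1 : Matrix (K × (F × F)) (K × (F × F)) ℝ) +
        (((Fintype.card F : ℝ) - 1) * ((Fintype.card F : ℝ) - 3)) •
          ((1 : Matrix K K ℝ) ⊗ₖ allOnes (F × F)) +
        (3 * ((Fintype.card F : ℝ) - 1)) • allOnes (K × (F × F)) := by
  rw [NN_add_eq_slopeMatrix ψ hβ]
  exact NN_gdd_general (slopeEquiv_mul_sub_left_bijective ψ hβ)
    (slopeEquiv_mul_sub_right_bijective ψ hβ)
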